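/- Let n ≥ 2 be an integer and set δ = 1 if n is odd and δ = 0 if n is even. Let g denote the standard generator of the cyclic group ℤ/nℤ and consider the element u = 4 − 2g^{1+δ} − 2g^{−(1+δ)} + Σ_{i=0}^{n−1} gⁱ of the group algebra ℚ[ℤ/nℤ]. Then the ℚ-linear endomorphism of ℚ[ℤ/nℤ] given by multiplication by u has determinant 2^{n−1}·n³. -/

import Mathlib

/-!
Over a field with enough roots of unity, the characters `χ` of a finite abelian group `G` form a
basis of the dual of the group algebra, and each is an eigenvector, with eigenvalue `χ u`, of the
transpose of multiplication by `u`; hence the determinant is `∏ χ, χ u`.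
For `u = c (1 - g) (1 - h) + ∑ x, x` with `g`, `h` generators of `G`, the trivial character gives
`|G|` and every other one gives `c (1 - χ g) (1 - χ h)`, where `∏ (1 - χ g) = |G|` over `χ ≠ 1`.
The resulting identity is polynomial in `c` with integer coefficients, so it holds over every
commutative ring once it holds for the generic `c = X` in `ℤ[X]`, which embeds into an algebraically
closed field of characteristic zero.
-/

open Module Polynomial Subgroup LinearMap

section CommonEigenvectors

variable {K A : Type*} [Field K] [Ring A] [Algebra K A] [FiniteDimensional K A]
  [Fintype (A →ₐ[K] K)]

theorem det_mulLeft_eq_prod_algHom (hcard : Fintype.card (A →ₐ[K] K) = finrank K A) (a : A) :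
    LinearMap.det (mulLeft K a) = ∏ φ : A →ₐ[K] K, φ a := by
  classical
  let b : Basis (A →ₐ[K] K) K (Dual K A) :=
    basisOfLinearIndependentOfCardEqFinrank' _ (linearIndependent_algHom_toLinearMap K A K)
      (hcard.trans Subspace.dual_finrank_eq.symm)
  have hb (φ : A →ₐ[K] K) : b φ = φ.toLinearMap := by simp [b]
  have hdiag : toMatrix b b (mulLeft K a).dualMap = Matrix.diagonal fun φ => φ a := by
    have heigen (φ : A →ₐ[K] K) : (mulLeft K a).dualMap (b φ) = φ a • b φ := by
      ext x
      simp [hb]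
    ext φ ψ
    rw [toMatrix_apply, heigen, map_smul, b.repr_self, Matrix.diagonal_apply]
    obtain rfl | hne := eq_or_ne φ ψ
    · simp
    · simp [hne]
  rw [← det_dualMap, ← det_toMatrix b, hdiag, Matrix.det_diagonal]

end CommonEigenvectors

theorem det_mulLeft_mapRingHom {R S G : Type*} [CommRing R] [CommRing S] [Monoid G] [Finite G]
    (f : R →+* S) (u : MonoidAlgebra R G) :
    LinearMap.det (mulLeft S (MonoidAlgebra.mapRingHom G f u)) =
      f (LinearMap.det (mulLeft R u)) := by
  classical
  have := Fintype.ofFinite G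
  rw [← det_toMatrix (MonoidAlgebra.basis G S), ← det_toMatrix (MonoidAlgebra.basis G R),
    RingHom.map_det]
  congr 1
  ext i j
  have hcol : MonoidAlgebra.mapRingHom G f u * MonoidAlgebra.single j 1 =
      MonoidAlgebra.mapRingHom G f (u * MonoidAlgebra.single j 1) := by simp
  simp only [toMatrix_apply, RingHom.mapMatrix_apply, Matrix.map_apply, mulLeft_apply,
    MonoidAlgebra.basis_apply, hcol]
  exact MonoidAlgebra.coeff_mapRingHom ..

section Characters

theorem card_monoidHom_eq_card {M G : Type*} [CommMonoid M] [CommGroup G] [Fintype G]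
    [Fintype (G →* M)] [HasEnoughRootsOfUnity M (Monoid.exponent G)] :
    Fintype.card (G →* M) = Fintype.card G := by
  rw [← Nat.card_eq_fintype_card, ← Nat.card_eq_fintype_card,
    Nat.card_congr MonoidHom.toHomUnitsMulEquiv.toEquiv,
    CommGroup.card_monoidHom_of_hasEnoughRootsOfUnity]

theorem det_mulLeft_eq_prod_lift {K G : Type*} [Field K] [CommGroup G] [Finite G]
    [Fintype (G →* K)] [HasEnoughRootsOfUnity K (Monoid.exponent G)] (u : MonoidAlgebra K G) :
    LinearMap.det (mulLeft K u) = ∏ χ : G →* K, MonoidAlgebra.lift K K G χ u := by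
  have := Fintype.ofFinite G
  have : Fintype (MonoidAlgebra K G →ₐ[K] K) := Fintype.ofFinite _
  have hcard : Fintype.card (MonoidAlgebra K G →ₐ[K] K) = finrank K (MonoidAlgebra K G) := by
    rw [← Fintype.card_congr (MonoidAlgebra.lift K K G), card_monoidHom_eq_card,
      finrank_eq_card_basis (MonoidAlgebra.basis G K)]
  rw [det_mulLeft_eq_prod_algHom hcard]
  exact (Fintype.prod_equiv (MonoidAlgebra.lift K K G) _ _ fun _ => rfl).symm

variable {R G : Type*} [CommRing R] [IsDomain R] [CommGroup G] [Fintype G] [Fintype (G →* R)]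
  [HasEnoughRootsOfUnity R (Monoid.exponent G)]

theorem nodal_monoidHom_apply_generator {g : G} (hg : zpowers g = ⊤) :
    Lagrange.nodal Finset.univ (fun χ : G →* R => χ g) = X ^ Fintype.card G - 1 := by
  have hinj : Set.InjOn (fun χ : G →* R => χ g) (Finset.univ : Finset (G →* R)) :=
    fun χ _ ψ _ h => MonoidHom.eq_of_eqOn_dense (zpowers_eq_closure g ▸ hg) (by simpa using h)
  have hdeg : (X ^ Fintype.card G - 1 : R[X]).degree = Fintype.card G :=
    degree_X_pow_sub_C Fintype.card_pos 1
  refine eq_of_degree_le_of_eval_index_eq _ hinj ?_ ?_ ?_ fun χ hχ => ?_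
  · exact Lagrange.degree_nodal.le
  · rw [Lagrange.degree_nodal, hdeg, Finset.card_univ, card_monoidHom_eq_card]
  · rw [Lagrange.nodal_monic.leadingCoeff, leadingCoeff_X_pow_sub_one Fintype.card_pos]
  · rw [Lagrange.eval_nodal_at_node (v := fun χ : G →* R => χ g) hχ]
    simp [← map_pow]

open scoped Classical in
theorem prod_one_sub_monoidHom_apply_generator {g : G} (hg : zpowers g = ⊤) :
    ∏ χ ∈ Finset.univ.erase (1 : G →* R), (1 - χ g) = Fintype.card G := by
  -- The product is the derivative of `∏ χ, (X - χ g) = X ^ |G| - 1` at its simple root `1`.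
  have hderiv := Lagrange.eval_nodal_derivative_eval_node_eq (v := fun χ : G →* R => χ g)
    (Finset.mem_univ 1)
  rw [nodal_monoidHom_apply_generator hg, Lagrange.eval_nodal] at hderiv
  simpa [derivative_X_pow] using hderiv.symm

end Characters

section DihedralElement

variable {R G : Type*} [CommRing R] [CommGroup G] [Fintype G]

/-- The element `c (1 - g) (1 - h) + ∑ x, x` of the group algebra `R[G]`. For `c = 2` and `h = g⁻¹`
it is the element `4 - 2 g - 2 g⁻¹ + ∑ x, x` of the dihedral-group isogeny construction; `g` and `h`
are kept independent because they contribute separate factors to the determinant. -/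
noncomputable def dihedralElement (c : R) (g h : G) : MonoidAlgebra R G :=
  c • ((1 - MonoidAlgebra.of R G g) * (1 - MonoidAlgebra.of R G h)) + ∑ x, MonoidAlgebra.of R G x

theorem mapRingHom_dihedralElement {S : Type*} [CommRing S] (f : R →+* S) (c : R) (g h : G) :
    MonoidAlgebra.mapRingHom G f (dihedralElement c g h) = dihedralElement (f c) g h := by
  have hsmul (x : MonoidAlgebra R G) : MonoidAlgebra.mapRingHom G f (c • x) =
      f c • MonoidAlgebra.mapRingHom G f x := by
    ext; simp
  simp [dihedralElement, hsmul]

theorem lift_dihedralElement_one (c : R) (g h : G) :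
    MonoidAlgebra.lift R R G 1 (dihedralElement c g h) = Fintype.card G := by
  simp [dihedralElement]

theorem lift_dihedralElement_of_ne_one [IsDomain R] {χ : G →* R} (hχ : χ ≠ 1) (c : R) (g h : G) :
    MonoidAlgebra.lift R R G χ (dihedralElement c g h) = c * ((1 - χ g) * (1 - χ h)) := by
  simp [dihedralElement, sum_hom_units_eq_zero χ hχ]

theorem dihedralElement_two_inv (g : G) :
    dihedralElement (2 : R) g g⁻¹ = 4 - 2 * MonoidAlgebra.of R G g - 2 * MonoidAlgebra.of R G g⁻¹ +
      ∑ x, MonoidAlgebra.of R G x := by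
  have hinv : MonoidAlgebra.of R G g * MonoidAlgebra.of R G g⁻¹ = 1 := by
    rw [← map_mul, mul_inv_cancel, map_one]
  rw [dihedralElement, ofNat_smul_eq_nsmul, nsmul_eq_mul]
  linear_combination (2 : MonoidAlgebra R G) * hinv

theorem det_mulLeft_dihedralElement_of_field {K : Type*} [Field K]
    [HasEnoughRootsOfUnity K (Monoid.exponent G)] (c : K) {g h : G}
    (hg : zpowers g = ⊤) (hh : zpowers h = ⊤) :
    LinearMap.det (mulLeft K (dihedralElement c g h)) =
      c ^ (Fintype.card G - 1) * Fintype.card G ^ 3 := by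
  classical
  have : Finite (G →* K) := .of_equiv _ MonoidHom.toHomUnitsMulEquiv.symm.toEquiv
  have := Fintype.ofFinite (G →* K)
  have hne : ∏ χ ∈ Finset.univ.erase (1 : G →* K),
      MonoidAlgebra.lift K K G χ (dihedralElement c g h) =
        c ^ (Fintype.card G - 1) * (Fintype.card G * Fintype.card G) := by
    rw [Finset.prod_congr rfl fun χ hχ =>
        lift_dihedralElement_of_ne_one (Finset.ne_of_mem_erase hχ) c g h,
      Finset.prod_mul_distrib, Finset.prod_mul_distrib, prod_one_sub_monoidHom_apply_generator hg,
      prod_one_sub_monoidHom_apply_generator hh, Finset.prod_const,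
      Finset.card_erase_of_mem (Finset.mem_univ _), Finset.card_univ, card_monoidHom_eq_card]
  rw [det_mulLeft_eq_prod_lift, ← Finset.mul_prod_erase _ _ (Finset.mem_univ 1),
    lift_dihedralElement_one, hne]
  ring

theorem det_mulLeft_dihedral_element_general (c : R) {g h : G}
    (hg : zpowers g = ⊤) (hh : zpowers h = ⊤) :
    LinearMap.det (mulLeft R (dihedralElement c g h)) =
      c ^ (Fintype.card G - 1) * Fintype.card G ^ 3 := by
  have huniv : LinearMap.det (mulLeft ℤ[X] (dihedralElement (X : ℤ[X]) g h)) =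
      X ^ (Fintype.card G - 1) * (Fintype.card G : ℤ[X]) ^ 3 := by
    let F := FractionRing ℤ[X]
    let φ : ℤ[X] →+* AlgebraicClosure F := (algebraMap F _).comp (algebraMap ℤ[X] F)
    have hφ : Function.Injective φ :=
      (algebraMap F _).injective.comp (IsFractionRing.injective ℤ[X] F)
    have : CharZero (AlgebraicClosure F) := charZero_of_injective_ringHom hφ
    apply hφ
    rw [← det_mulLeft_mapRingHom, mapRingHom_dihedralElement,
      det_mulLeft_dihedralElement_of_field _ hg hh]
    simp
  let f : ℤ[X] →+* R := eval₂RingHom (Int.castRingHom R) c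
  have hf : f X = c := eval₂_X _ _
  rw [← hf, ← mapRingHom_dihedralElement, det_mulLeft_mapRingHom, huniv]
  simp

end DihedralElement

section CyclicGenerators

theorem zpowers_pow_eq_top {G : Type*} [Group G] {g : G} {k : ℕ} (hg : zpowers g = ⊤)
    (hk : (Nat.card G).Coprime k) : zpowers (g ^ k) = ⊤ := by
  have hgk : g ∈ zpowers (g ^ k) :=
    mem_zpowers_pow_iff.mpr ((orderOf_eq_card_of_zpowers_eq_top hg).symm ▸ hk.symm)
  exact top_le_iff.mp (hg ▸ zpowers_le.mpr hgk)

theorem sum_range_card_pow_generator {G M : Type*} [Group G] [Fintype G] [AddCommMonoid M] {g : G}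
    (hg : zpowers g = ⊤) (f : G → M) :
    ∑ i ∈ Finset.range (Fintype.card G), f (g ^ i) = ∑ x, f x := by
  classical
  have horder : orderOf g = Fintype.card G := by
    rw [orderOf_eq_card_of_zpowers_eq_top hg, Nat.card_eq_fintype_card]
  rw [← IsCyclic.image_range_card ((eq_top_iff' _).mp hg), Nat.card_eq_fintype_card,
    Finset.sum_image]
  simpa [horder] using pow_injOn_Iio_orderOf (x := g)

theorem zpowers_ofAdd_one (n : ℕ) : zpowers (Multiplicative.ofAdd (1 : ZMod n)) = ⊤ := by
  refine (eq_top_iff' _).mpr fun x => ⟨(x.toAdd.cast : ℤ), ?_⟩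
  simp [← ofAdd_zsmul]

theorem zpowers_ofAdd_one_pow_eq_top (n : ℕ) :
    zpowers (Multiplicative.ofAdd (1 : ZMod n) ^ (1 + if Odd n then 1 else 0)) = ⊤ := by
  have hcoprime : n.Coprime (1 + if Odd n then 1 else 0) := by
    split_ifs with hn
    · exact hn.coprime_two_right
    · exact n.coprime_one_right
  exact zpowers_pow_eq_top (zpowers_ofAdd_one n) (by
    rwa [Nat.card_congr Multiplicative.toAdd, Nat.card_zmod])

theorem sum_range_ofAdd_one_pow {M : Type*} [AddCommMonoid M] (n : ℕ) [NeZero n]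
    (f : Multiplicative (ZMod n) → M) :
    ∑ i ∈ Finset.range n, f (Multiplicative.ofAdd (1 : ZMod n) ^ i) = ∑ x, f x := by
  simpa using sum_range_card_pow_generator (zpowers_ofAdd_one n) f

end CyclicGenerators

/-- Let `n ≥ 2`, `δ = 1` if `n` is odd and `δ = 0` if `n` is even, and let `g` be the
standard generator of `ℤ/nℤ`. Multiplication by
`u = 4 − 2g^{1+δ} − 2g^{−(1+δ)} + Σ_{i=0}^{n−1} gⁱ` on the group algebra `ℚ[ℤ/nℤ]`
has determinant `2^{n−1}·n³`. -/
theorem det_mulLeft_dihedral_element (n : ℕ) [NeZero n] (hn : 2 ≤ n) :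
    LinearMap.det (LinearMap.mulLeft ℚ
      ((4 : MonoidAlgebra ℚ (Multiplicative (ZMod n)))
        - 2 * MonoidAlgebra.of ℚ (Multiplicative (ZMod n))
            ((Multiplicative.ofAdd (1 : ZMod n)) ^ (1 + if Odd n then 1 else 0))
        - 2 * MonoidAlgebra.of ℚ (Multiplicative (ZMod n))
            (((Multiplicative.ofAdd (1 : ZMod n)) ^ (1 + if Odd n then 1 else 0))⁻¹)
        + ∑ i ∈ Finset.range n,
            MonoidAlgebra.of ℚ (Multiplicative (ZMod n))
              ((Multiplicative.ofAdd (1 : ZMod n)) ^ i))) =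
      2 ^ (n - 1) * (n : ℚ) ^ 3 := by
  have hgen := zpowers_ofAdd_one_pow_eq_top n
  rw [sum_range_ofAdd_one_pow, ← dihedralElement_two_inv,
    det_mulLeft_dihedral_element_general 2 hgen (zpowers_inv.trans hgen),
    Fintype.card_multiplicative, ZMod.card]
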